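/- Local existence for the approximating equation: let r > 0, let n be an integer satisfying condition (⋆), and suppose R_n : X_r → X_r is a map such that √n·R_n(u) − (1/p⁰)Q(R_n(u),R_n(u)) = u in L¹(ℝ³) for every u ∈ X_r. Set δ = 1/(4n). Then for every g₀ ∈ X_r there exists a unique continuous map f : [0,δ] → L¹(ℝ³) with f(t) ∈ X_r for all t ∈ [0,δ] such that f(t) = e^{−nt}g₀ + ∫₀ᵗ n√n·e^{−n(t−s)}R_n(f(s)) ds (Bochner integral in L¹(ℝ³)) for all t ∈ [0,δ]; moreover f(0) = g₀ and sup_{t ∈ [0,δ]} ‖f(t)‖ ≤ ‖g₀‖. -/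

import Mathlib

/-!
The equation is solved by Banach's fixed point theorem, once `A = √n R_n` is known to preserve the
`L¹`-norm of elements of `X_r` and to be 3-Lipschitz on `X_r`. Both facts come from one symmetry of
the collision operator.

For fixed `ω`, the collision `(p̄, q̄) ↦ (p̄′, q̄′)` moves `(p̄, q̄)` along the line with direction
`(ω̂, -ω̂)`. On such a line only the components along `ω̂` change, the transversal parts of `(p⁰)²`
and `(q⁰)²` act as squared masses, and the collision is the one-dimensional elastic collision `sig`.
The latter is the Lorentzian reflection of the energy-momentum of one particle in the total
energy-momentum, hence an involution, and its derivative is `-p′⁰q′⁰/(p⁰q⁰)`. Therefore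
`ds/(p⁰q⁰)` is preserved on each line (`lintegral_line`), and averaging over parallel lines
(`lintegral_eq_of_lines`) shows that `dp̄ dq̄/(p⁰q⁰)` is preserved (`map_collT`). Together with the
symmetry of `S₀` this turns the gain term into the loss term after a change of variables, so that
`∫ Q(h,h)/p⁰ = 0` (`Qcoll_mass`) and, with `C = 4πC₁αβ²`,
`‖(Q(h,h) - Q(k,k))/p⁰‖ ≤ 2C(‖h‖ + ‖k‖)‖h - k‖` (`Qcoll_diff`).

Integrating `√n R_n(u) - Q(R_n(u),R_n(u))/p⁰ = u` gives `√n ‖R_n(u)‖ = ‖u‖` (`resolvent_norm`).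
Subtracting two such equations, the collision terms contribute at most `4Cr ‖R_n(u) - R_n(v)‖`,
and `4Cr ≤ (2/3)√n`, so that `√n ‖R_n(u) - R_n(v)‖ ≤ 3 ‖u - v‖` (`resolvent_lipschitz`).

The Picard map then preserves the continuous functions with values in `X_ρ`, `ρ = ‖g₀‖`, because
its kernel has total mass `1 - e^{-nt}` (`picard_memX`), and on `[0, 1/(4n)]` it is a contraction
with constant `3/4` (`picard_contract`). This gives a solution with `‖f(t)‖ ≤ ‖g₀‖`, and uniqueness
among all solutions with values in `X_r`.
-/

open MeasureTheory Real

noncomputable section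

/-- Momentum space `ℝ³`. -/
abbrev E3 : Type := EuclideanSpace ℝ (Fin 3)

/-- The scalar product associated with the Bianchi type I metric coefficients `α = a(t)`,
`β = b(t)`: `p̄·q̄ = α²p¹q¹ + β²(p²q² + p³q³)`. -/
def mdot (α β : ℝ) (p q : E3) : ℝ :=
  α ^ 2 * p 0 * q 0 + β ^ 2 * (p 1 * q 1 + p 2 * q 2)

/-- `p⁰ = √(1 + |p̄|²)` where `|p̄|² = p̄·p̄`. -/
def pZ (α β : ℝ) (p : E3) : ℝ := Real.sqrt (1 + mdot α β p p)

/-- `ω` normalized to unit length for the metric norm. -/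
def omHat (α β : ℝ) (ω : E3) : E3 := (Real.sqrt (mdot α β ω ω))⁻¹ • ω

/-- The total energy `e = p⁰ + q⁰`. -/
def collE (α β : ℝ) (p q : E3) : ℝ := pZ α β p + pZ α β q

/-- The function `C(p̄, q̄, ω)` of Glassey's representation of post-collisional momenta. -/
def collC (α β : ℝ) (p q ω : E3) : ℝ :=
  2 * pZ α β p * pZ α β q * collE α β p q *
      mdot α β (omHat α β ω) ((pZ α β q)⁻¹ • q - (pZ α β p)⁻¹ • p) /
    (collE α β p q ^ 2 - mdot α β (omHat α β ω) (p + q) ^ 2)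

/-- The post-collisional momentum `p̄′ = p̄ + C(p̄,q̄,ω)ω̂`. -/
def pPr (α β : ℝ) (p q ω : E3) : E3 := p + collC α β p q ω • omHat α β ω

/-- The post-collisional momentum `q̄′ = q̄ − C(p̄,q̄,ω)ω̂`. -/
def qPr (α β : ℝ) (p q ω : E3) : E3 := q - collC α β p q ω • omHat α β ω

/-- The surface measure on the unit sphere `S² ⊂ ℝ³`. -/
def sphMeas : Measure (Metric.sphere (0 : E3) 1) := (volume : Measure E3).toSphere

/-- The gain term `Q⁺(f,g)`. -/
def Qplus (α β : ℝ) (S₀ : E3 → E3 → E3 → E3 → ℝ) (f g : E3 → ℝ) (p : E3) : ℝ :=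
  α * β ^ 2 *
    ∫ q : E3, (pZ α β q)⁻¹ *
      ∫ ω : Metric.sphere (0 : E3) 1,
        f (pPr α β p q ω) * g (qPr α β p q ω) *
          S₀ p q (pPr α β p q ω) (qPr α β p q ω) ∂sphMeas

/-- The loss term `Q⁻(f,g)`. -/
def Qminus (α β : ℝ) (S₀ : E3 → E3 → E3 → E3 → ℝ) (f g : E3 → ℝ) (p : E3) : ℝ :=
  α * β ^ 2 *
    ∫ q : E3, (pZ α β q)⁻¹ *
      ∫ ω : Metric.sphere (0 : E3) 1,
        f p * g q * S₀ p q (pPr α β p q ω) (qPr α β p q ω) ∂sphMeas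

/-- The collision operator `Q = Q⁺ − Q⁻`. -/
def Qcoll (α β : ℝ) (S₀ : E3 → E3 → E3 → E3 → ℝ) (f g : E3 → ℝ) (p : E3) : ℝ :=
  Qplus α β S₀ f g p - Qminus α β S₀ f g p

/-- The space `L¹(ℝ³)`. -/
abbrev L1 : Type := Lp ℝ 1 (volume : Measure E3)

/-- Membership in `X_r = {f ∈ L¹(ℝ³) : f ≥ 0 a.e., ‖f‖ ≤ r}`. -/
def memX (r : ℝ) (f : L1) : Prop := (0 ≤ᵐ[volume] ⇑f) ∧ ‖f‖ ≤ r

end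

/-! ### The one-dimensional elastic collision -/

/-- The one-dimensional relativistic elastic collision: two particles of squared masses `a` and `b`
with momenta `x` and `P - x` collide, and `sig a b P x` is the new momentum of the first one. With
`A = √(a + x²)`, `B = √(b + (P - x)²)` and `e = A + B`, the new energy-momentum vector is the
Lorentzian reflection of `(A, x)` in the axis spanned by the total vector `(e, P)`. -/
noncomputable def sig (a b P x : ℝ) : ℝ :=
  x + 2 * (√(a + x ^ 2) + √(b + (P - x) ^ 2)) *
      (P * √(a + x ^ 2) - x * (√(a + x ^ 2) + √(b + (P - x) ^ 2))) /
    ((√(a + x ^ 2) + √(b + (P - x) ^ 2)) ^ 2 - P ^ 2)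

lemma abs_lt_sqrt_add {a : ℝ} (ha : 0 < a) (x : ℝ) : |x| < √(a + x ^ 2) := by
  rw [← Real.sqrt_sq_eq_abs]
  exact Real.sqrt_lt_sqrt (sq_nonneg x) (by linarith)

lemma inv_mass_pos {A B x P : ℝ} (hA : |x| < A) (hB : |P - x| < B) :
    0 < (A + B) ^ 2 - P ^ 2 := by
  have h1 := abs_lt.mp hA
  have h2 := abs_lt.mp hB
  nlinarith

lemma energy_pos_aux {A e x P : ℝ} (hA : |x| < A) (he : |P| < e) :
    0 < A * e ^ 2 - 2 * e * x * P + A * P ^ 2 := by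
  have h1 := abs_lt.mp hA
  have h2 := abs_lt.mp he
  have h3 : 0 < e - P := by linarith
  have h4 : 0 < e + P := by linarith
  have h5 : 0 < (A + x) * (e - P) ^ 2 := mul_pos (by linarith) (by positivity)
  have h6 : 0 < (A - x) * (e + P) ^ 2 := mul_pos (by linarith) (by positivity)
  nlinarith

/-- The energy of the first particle after the collision, i.e. the time component of the reflection
of `(A, x)` in the axis spanned by `(e, P)`. -/
lemma sqrt_sig_left {a b : ℝ} (ha : 0 < a) (hb : 0 < b) (P x : ℝ) :
    √(a + sig a b P x ^ 2) =
      2 * (√(a + x ^ 2) + √(b + (P - x) ^ 2)) *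
        ((√(a + x ^ 2) + √(b + (P - x) ^ 2)) * √(a + x ^ 2) - x * P) /
          ((√(a + x ^ 2) + √(b + (P - x) ^ 2)) ^ 2 - P ^ 2) - √(a + x ^ 2) := by
  have hA := abs_lt_sqrt_add ha x
  have hB := abs_lt_sqrt_add hb (P - x)
  have hA2 : √(a + x ^ 2) ^ 2 = a + x ^ 2 := Real.sq_sqrt (by positivity)
  unfold sig
  set A := √(a + x ^ 2)
  set B := √(b + (P - x) ^ 2)
  have hD := inv_mass_pos hA hB
  have he : |P| < A + B := by
    have := abs_add_le x (P - x)
    rw [add_sub_cancel] at this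
    linarith
  have hpos := energy_pos_aux hA he
  set e := A + B
  rw [show 2 * e * (e * A - x * P) / (e ^ 2 - P ^ 2) - A =
    (A * e ^ 2 - 2 * e * x * P + A * P ^ 2) / (e ^ 2 - P ^ 2) by field_simp; ring]
  rw [Real.sqrt_eq_iff_mul_self_eq (by positivity) (by positivity)]
  have : a = A ^ 2 - x ^ 2 := by linarith
  rw [this]
  field_simp
  ring

lemma sqrt_sig_right {a b : ℝ} (ha : 0 < a) (hb : 0 < b) (P x : ℝ) :
    √(b + (P - sig a b P x) ^ 2) =
      2 * (√(a + x ^ 2) + √(b + (P - x) ^ 2)) *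
        ((√(a + x ^ 2) + √(b + (P - x) ^ 2)) * √(b + (P - x) ^ 2) - (P - x) * P) /
          ((√(a + x ^ 2) + √(b + (P - x) ^ 2)) ^ 2 - P ^ 2) - √(b + (P - x) ^ 2) := by
  have hA := abs_lt_sqrt_add ha x
  have hB := abs_lt_sqrt_add hb (P - x)
  have hD := inv_mass_pos hA hB
  -- exchanging the two particles conjugates `sig a b P` to `sig b a P`
  have hs : P - sig a b P x = sig b a P (P - x) := by
    unfold sig
    rw [sub_sub_cancel, add_comm (√(b + (P - x) ^ 2)) (√(a + x ^ 2))]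
    field_simp
    ring
  rw [hs, sqrt_sig_left hb ha, sub_sub_cancel, add_comm (√(b + (P - x) ^ 2)) (√(a + x ^ 2))]

lemma sig_sig {a b : ℝ} (ha : 0 < a) (hb : 0 < b) (P x : ℝ) :
    sig a b P (sig a b P x) = x := by
  have hA := abs_lt_sqrt_add ha x
  have hB := abs_lt_sqrt_add hb (P - x)
  have hD := inv_mass_pos hA hB
  have h1 := sqrt_sig_left ha hb P x
  have h2 := sqrt_sig_right ha hb P x
  have hsum : √(a + sig a b P x ^ 2) + √(b + (P - sig a b P x) ^ 2) =
      √(a + x ^ 2) + √(b + (P - x) ^ 2) := by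
    rw [h1, h2]
    field_simp
    ring
  rw [sig, hsum, h1, sig]
  set A := √(a + x ^ 2)
  set B := √(b + (P - x) ^ 2)
  set e := A + B
  field_simp
  ring

/-- The derivative of the collision is `-(A' B') / (A B)`, with `A, B` the energies before and
`A', B'` the energies after the collision. -/
lemma hasDerivAt_sig {a b : ℝ} (ha : 0 < a) (hb : 0 < b) (P x : ℝ) :
    HasDerivAt (sig a b P)
      (-(√(a + sig a b P x ^ 2) * √(b + (P - sig a b P x) ^ 2)) /
        (√(a + x ^ 2) * √(b + (P - x) ^ 2))) x := by
  have hA := abs_lt_sqrt_add ha x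
  have hB := abs_lt_sqrt_add hb (P - x)
  have hD := inv_mass_pos hA hB
  have hA0 : 0 < √(a + x ^ 2) := by positivity
  have hB0 : 0 < √(b + (P - x) ^ 2) := by positivity
  have dA : HasDerivAt (fun x => √(a + x ^ 2)) (x / √(a + x ^ 2)) x := by
    have := ((hasDerivAt_pow 2 x).const_add a).sqrt (by positivity)
    convert this using 1
    field_simp
    simp [mul_comm]
  have dB : HasDerivAt (fun x => √(b + (P - x) ^ 2)) (-(P - x) / √(b + (P - x) ^ 2)) x := by
    have h0 : HasDerivAt (fun x => b + (P - x) ^ 2) (-(2 * (P - x))) x := by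
      refine ((((hasDerivAt_id x).const_sub P).pow 2).const_add b).congr_deriv ?_
      simp only [id, Nat.cast_ofNat]
      ring
    convert h0.sqrt (by positivity) using 1
    field_simp
  have de := dA.add dB
  have h := (hasDerivAt_id x).add
    (((de.const_mul 2).mul ((dA.const_mul P).sub ((hasDerivAt_id x).mul de))).div
      ((de.pow 2).sub_const (P ^ 2)) hD.ne')
  refine (h.congr_deriv ?_).congr_of_eventuallyEq (Filter.Eventually.of_forall fun y => ?_)
  · rw [sqrt_sig_left ha hb, sqrt_sig_right ha hb]
    simp only [id, Pi.add_apply, Pi.mul_apply, Pi.sub_apply, Pi.pow_apply,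
      Nat.cast_ofNat]
    generalize √(a + x ^ 2) = A at *
    generalize √(b + (P - x) ^ 2) = B at *
    field_simp
    ring
  · simp [sig]

/-- The one-dimensional collision preserves the measure `dx / (A B)`, where `A` and `B` are the
energies of the two particles: change of variables with the derivative from `hasDerivAt_sig`. -/
lemma lintegral_sig {a b : ℝ} (ha : 0 < a) (hb : 0 < b) (P : ℝ) (F : ℝ → ENNReal) :
    ∫⁻ x, F (sig a b P x) * ENNReal.ofReal ((√(a + x ^ 2))⁻¹ * (√(b + (P - x) ^ 2))⁻¹) =
    ∫⁻ x, F x * ENNReal.ofReal ((√(a + x ^ 2))⁻¹ * (√(b + (P - x) ^ 2))⁻¹) := by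
  have hinv : Function.Involutive (sig a b P) := sig_sig ha hb P
  have h := lintegral_image_eq_lintegral_abs_deriv_mul (s := Set.univ) MeasurableSet.univ
    (fun x _ => (hasDerivAt_sig ha hb P x).hasDerivWithinAt) hinv.injective.injOn
    (fun x => F x * ENNReal.ofReal ((√(a + x ^ 2))⁻¹ * (√(b + (P - x) ^ 2))⁻¹))
  rw [Set.image_univ, hinv.surjective.range_eq, Measure.restrict_univ] at h
  rw [h]
  refine lintegral_congr fun x => ?_
  rw [mul_left_comm, ← ENNReal.ofReal_mul (abs_nonneg _)]
  congr 2
  have h1 : 0 < √(a + x ^ 2) := by positivity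
  have h2 : 0 < √(b + (P - x) ^ 2) := by positivity
  have h3 : 0 < √(a + sig a b P x ^ 2) := by positivity
  have h4 : 0 < √(b + (P - sig a b P x) ^ 2) := by positivity
  rw [abs_div, abs_neg, abs_of_pos (by positivity), abs_of_pos (by positivity)]
  field_simp

/-! ### The collision transformation on lines -/

lemma mdot_comm (α β : ℝ) (p q : E3) : mdot α β p q = mdot α β q p := by
  simp only [mdot]; ring

lemma mdot_add_right (α β : ℝ) (k p q : E3) :
    mdot α β k (p + q) = mdot α β k p + mdot α β k q := by
  simp only [mdot, PiLp.add_apply]; ring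

lemma mdot_smul_right (α β s : ℝ) (k p : E3) : mdot α β k (s • p) = s * mdot α β k p := by
  simp only [mdot, PiLp.smul_apply, smul_eq_mul]; ring

lemma mdot_sub_right (α β : ℝ) (k p q : E3) :
    mdot α β k (p - q) = mdot α β k p - mdot α β k q := by
  simp only [mdot, PiLp.sub_apply]; ring

lemma mdot_self_nonneg (α β : ℝ) (p : E3) : 0 ≤ mdot α β p p := by
  have : mdot α β p p = (α * p 0) ^ 2 + ((β * p 1) ^ 2 + (β * p 2) ^ 2) := by
    simp only [mdot]; ring
  rw [this]; positivity

lemma mdot_self_pos {α β : ℝ} (hα : 0 < α) (hβ : 0 < β) {p : E3} (hp : p ≠ 0) :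
    0 < mdot α β p p := by
  refine lt_of_le_of_ne (mdot_self_nonneg α β p) fun h => hp ?_
  have h' : (α * p 0) ^ 2 + ((β * p 1) ^ 2 + (β * p 2) ^ 2) = 0 := by
    rw [h]; simp only [mdot]; ring
  have h0 : α * p 0 = 0 := by nlinarith [sq_nonneg (α * p 0), sq_nonneg (β * p 1), sq_nonneg (β * p 2)]
  have h1 : β * p 1 = 0 := by nlinarith [sq_nonneg (α * p 0), sq_nonneg (β * p 1), sq_nonneg (β * p 2)]
  have h2 : β * p 2 = 0 := by nlinarith [sq_nonneg (α * p 0), sq_nonneg (β * p 1), sq_nonneg (β * p 2)]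
  ext i
  fin_cases i
  · simpa [hα.ne'] using h0
  · simpa [hβ.ne'] using h1
  · simpa [hβ.ne'] using h2

lemma mdot_omHat_self {α β : ℝ} (hα : 0 < α) (hβ : 0 < β) {ω : E3} (hω : ω ≠ 0) :
    mdot α β (omHat α β ω) (omHat α β ω) = 1 := by
  have h := mdot_self_pos hα hβ hω
  unfold omHat
  rw [mdot_smul_right, mdot_comm α β (_ • ω), mdot_smul_right, ← mul_assoc, ← mul_inv,
    Real.mul_self_sqrt h.le, inv_mul_cancel₀ h.ne']

lemma mdot_line {α β : ℝ} {k : E3} (hk : mdot α β k k = 1) (p : E3) (s : ℝ) :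
    mdot α β (p + s • k) (p + s • k) =
      (mdot α β p p - mdot α β k p ^ 2) + (mdot α β k p + s) ^ 2 := by
  simp only [mdot, PiLp.add_apply, PiLp.smul_apply, smul_eq_mul] at hk ⊢
  linear_combination s ^ 2 * hk

/-- Cauchy–Schwarz against a unit vector of the metric. -/
lemma mdot_sq_le {α β : ℝ} {k : E3} (hk : mdot α β k k = 1) (p : E3) :
    mdot α β k p ^ 2 ≤ mdot α β p p := by
  have h := mdot_line hk p (-mdot α β k p)
  have h' := mdot_self_nonneg α β (p + (-mdot α β k p) • k)
  rw [h] at h'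
  nlinarith

/-- The part `1 + |p̄|² − (k·p̄)²` of `(p⁰)²` transversal to the unit direction `k`. It does not
change when `p̄` moves along `k`, so it acts as squared mass of the motion in direction `k`. -/
noncomputable def tmass (α β : ℝ) (k p : E3) : ℝ := 1 + mdot α β p p - mdot α β k p ^ 2

lemma tmass_pos {α β : ℝ} {k : E3} (hk : mdot α β k k = 1) (p : E3) : 0 < tmass α β k p := by
  have := mdot_sq_le hk p
  unfold tmass; linarith

lemma pZ_pos (α β : ℝ) (p : E3) : 0 < pZ α β p :=
  Real.sqrt_pos.mpr (by have := mdot_self_nonneg α β p; linarith)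

lemma one_le_pZ (α β : ℝ) (p : E3) : 1 ≤ pZ α β p :=
  Real.one_le_sqrt.mpr (by have := mdot_self_nonneg α β p; linarith)

lemma pZ_line {α β : ℝ} {k : E3} (hk : mdot α β k k = 1) (p : E3) (s : ℝ) :
    pZ α β (p + s • k) = √(tmass α β k p + (mdot α β k p + s) ^ 2) := by
  unfold pZ tmass
  rw [mdot_line hk]
  congr 1
  ring

lemma pZ_line_sub {α β : ℝ} {k : E3} (hk : mdot α β k k = 1) (p q : E3) (s : ℝ) :
    pZ α β (q - s • k) = √(tmass α β k q +
      ((mdot α β k p + mdot α β k q) - (mdot α β k p + s)) ^ 2) := by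
  rw [sub_eq_add_neg, ← neg_smul, pZ_line hk]
  congr 3
  ring

/-- On the line `s ↦ (p̄ + s ω̂, q̄ − s ω̂)` the component of the first momentum along `ω̂` is
`x = ω̂·p̄ + s`, and the collision replaces it by `sig a b P x`, where `a`, `b` are the transversal
masses `tmass` of the two particles and `P` is their total momentum along `ω̂`. -/
lemma collC_line {α β : ℝ} {ω : E3} (hk : mdot α β (omHat α β ω) (omHat α β ω) = 1)
    (p q : E3) (s : ℝ) :
    collC α β (p + s • omHat α β ω) (q - s • omHat α β ω) ω =
      sig (tmass α β (omHat α β ω) p) (tmass α β (omHat α β ω) q)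
        (mdot α β (omHat α β ω) p + mdot α β (omHat α β ω) q) (mdot α β (omHat α β ω) p + s) -
      (mdot α β (omHat α β ω) p + s) := by
  have h1 := pZ_line hk p s
  have h2 := pZ_line_sub hk p q s
  have p1 := pZ_pos α β (p + s • omHat α β ω)
  have p2 := pZ_pos α β (q - s • omHat α β ω)
  unfold collC collE sig
  rw [← h1, ← h2]
  simp only [mdot_add_right, mdot_sub_right, mdot_smul_right, hk]
  rw [add_sub_cancel_left]
  congr 1
  · field_simp
    ring
  · ring

/-- The collision transformation `(p̄, q̄) ↦ (p̄′, q̄′)` in the direction `ω`. -/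
noncomputable def collT (α β : ℝ) (ω : E3) (z : E3 × E3) : E3 × E3 :=
  (pPr α β z.1 z.2 ω, qPr α β z.1 z.2 ω)

/-- The direction of the lines preserved by `collT`. -/
noncomputable def collD (α β : ℝ) (ω : E3) : E3 × E3 := (omHat α β ω, -omHat α β ω)

lemma collT_line {α β : ℝ} {ω : E3} (hk : mdot α β (omHat α β ω) (omHat α β ω) = 1)
    (z : E3 × E3) (s : ℝ) :
    collT α β ω (z + s • collD α β ω) = z +
      (sig (tmass α β (omHat α β ω) z.1) (tmass α β (omHat α β ω) z.2)
        (mdot α β (omHat α β ω) z.1 + mdot α β (omHat α β ω) z.2)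
        (mdot α β (omHat α β ω) z.1 + s) - mdot α β (omHat α β ω) z.1) • collD α β ω := by
  obtain ⟨p, q⟩ := z
  have h : (p, q) + s • collD α β ω = (p + s • omHat α β ω, q - s • omHat α β ω) := by
    simp [collD, sub_eq_add_neg]
  rw [h]
  simp only [collT, pPr, qPr, collC_line hk, collD]
  ext1
  · simp only [Prod.fst_add, Prod.smul_fst]; module
  · simp only [Prod.snd_add, Prod.smul_snd]; module

lemma collT_collT {α β : ℝ} {ω : E3} (hk : mdot α β (omHat α β ω) (omHat α β ω) = 1)
    (z : E3 × E3) : collT α β ω (collT α β ω z) = z := by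
  have h0 := collT_line hk z 0
  rw [zero_smul, add_zero, add_zero] at h0
  rw [h0, collT_line hk, add_sub_cancel, sig_sig (tmass_pos hk _) (tmass_pos hk _)]
  simp

/-- The Lorentz invariant weight `1/(p⁰q⁰)`. -/
noncomputable def wgt (α β : ℝ) (z : E3 × E3) : ENNReal :=
  ENNReal.ofReal ((pZ α β z.1)⁻¹) * ENNReal.ofReal ((pZ α β z.2)⁻¹)

/-- On each line in direction `collD`, the collision preserves `ds / (p⁰ q⁰)`. -/
lemma lintegral_line {α β : ℝ} {ω : E3} (hk : mdot α β (omHat α β ω) (omHat α β ω) = 1)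
    (F : E3 × E3 → ENNReal) (z : E3 × E3) :
    ∫⁻ s : ℝ, F (collT α β ω (z + s • collD α β ω)) * wgt α β (z + s • collD α β ω) =
    ∫⁻ s : ℝ, F (z + s • collD α β ω) * wgt α β (z + s • collD α β ω) := by
  have hw : ∀ s : ℝ, wgt α β (z + s • collD α β ω) =
      ENNReal.ofReal ((√(tmass α β (omHat α β ω) z.1 + (mdot α β (omHat α β ω) z.1 + s) ^ 2))⁻¹ *
        (√(tmass α β (omHat α β ω) z.2 + ((mdot α β (omHat α β ω) z.1 + mdot α β (omHat α β ω) z.2)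
          - (mdot α β (omHat α β ω) z.1 + s)) ^ 2))⁻¹) := by
    intro s
    rw [← pZ_line hk, ← pZ_line_sub hk, ENNReal.ofReal_mul (inv_nonneg.mpr (pZ_pos α β _).le)]
    simp [wgt, collD, sub_eq_add_neg]
  simp only [hw, collT_line hk]
  set u := mdot α β (omHat α β ω) z.1
  set v := mdot α β (omHat α β ω) z.2
  set a := tmass α β (omHat α β ω) z.1
  set b := tmass α β (omHat α β ω) z.2
  have h := lintegral_sig (tmass_pos hk z.1) (tmass_pos hk z.2) (u + v)
    (fun x => F (z + (x - u) • collD α β ω))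
  rw [← lintegral_add_left_eq_self _ u,
    ← lintegral_add_left_eq_self (fun x => F (z + (x - u) • collD α β ω) * _) u] at h
  simpa only [add_sub_cancel_left] using h

/-! ### Invariance of the collision measure -/

lemma measurable_mdot (α β : ℝ) : Measurable fun z : E3 × E3 => mdot α β z.1 z.2 := by
  unfold mdot; fun_prop

lemma measurable_pZ (α β : ℝ) : Measurable (pZ α β) := by
  unfold pZ mdot; fun_prop

lemma measurable_wgt (α β : ℝ) : Measurable (wgt α β) := by
  have := measurable_pZ α β
  unfold wgt; fun_prop

lemma measurable_omHat (α β : ℝ) : Measurable (omHat α β) := by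
  unfold omHat mdot; fun_prop

lemma measurable_collT (α β : ℝ) :
    Measurable fun x : E3 × (E3 × E3) => collT α β x.1 x.2 := by
  have h1 := measurable_pZ α β
  have h2 := measurable_omHat α β
  have hm : ∀ {f g : E3 × (E3 × E3) → E3}, Measurable f → Measurable g →
      Measurable fun x => mdot α β (f x) (g x) := fun hf hg =>
    (measurable_mdot α β).comp (hf.prodMk hg)
  have hp : Measurable fun x : E3 × (E3 × E3) => pZ α β x.2.1 := by fun_prop
  have hq : Measurable fun x : E3 × (E3 × E3) => pZ α β x.2.2 := by fun_prop
  have ho : Measurable fun x : E3 × (E3 × E3) => omHat α β x.1 := by fun_prop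
  have hc : Measurable fun x : E3 × (E3 × E3) => collC α β x.2.1 x.2.2 x.1 := by
    unfold collC collE
    have h3 := hm ho (g := fun x => (pZ α β x.2.2)⁻¹ • x.2.2 - (pZ α β x.2.1)⁻¹ • x.2.1)
      ((hq.inv.smul (by fun_prop)).sub (hp.inv.smul (by fun_prop)))
    have h4 := hm ho (g := fun x => x.2.1 + x.2.2) (by fun_prop)
    exact ((((hp.const_mul 2).mul hq).mul (hp.add hq)).mul h3).div
      (((hp.add hq).pow_const 2).sub (h4.pow_const 2))
  unfold collT pPr qPr
  exact ((measurable_fst.comp measurable_snd).add (hc.smul ho)).prodMk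
    ((measurable_snd.comp measurable_snd).sub (hc.smul ho))

/-- Two functions with the same integral over every line in direction `d` have the same integral
for a translation invariant measure. Instead of choosing coordinates adapted to `d`, one inserts
`1 = ∫ 𝟙_{[0,1]}(ℓ z - s) ds`, translates `z` by `s • d` and exchanges the integrals. -/
lemma lintegral_eq_of_lines {V : Type*} [NormedAddCommGroup V] [NormedSpace ℝ V]
    [MeasurableSpace V] [BorelSpace V] [SecondCountableTopology V]
    (μ : Measure V) [SFinite μ] [μ.IsAddLeftInvariant]
    (ℓ : V →L[ℝ] ℝ) {d : V} (hd : ℓ d = 1) {G H : V → ENNReal} (hG : Measurable G)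
    (hH : Measurable H) (h : ∀ z, ∫⁻ s : ℝ, G (z + s • d) = ∫⁻ s : ℝ, H (z + s • d)) :
    ∫⁻ z, G z ∂μ = ∫⁻ z, H z ∂μ := by
  have key : ∀ K : V → ENNReal, Measurable K → ∫⁻ z, K z ∂μ =
      ∫⁻ z, Set.indicator (Set.Icc (0 : ℝ) 1) 1 (ℓ z) * (∫⁻ s : ℝ, K (z + s • d)) ∂μ := by
    intro K hK
    have hψ : Measurable (Set.indicator (Set.Icc (0 : ℝ) 1) (1 : ℝ → ENNReal)) :=
      measurable_one.indicator measurableSet_Icc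
    have hℓ : Measurable ℓ := ℓ.continuous.measurable
    calc ∫⁻ z, K z ∂μ
        = ∫⁻ z, (∫⁻ s : ℝ, K z * Set.indicator (Set.Icc (0 : ℝ) 1) 1 (ℓ z - s)) ∂μ := by
          refine lintegral_congr fun z => ?_
          rw [lintegral_const_mul _ (by fun_prop),
            lintegral_sub_left_eq_self (Set.indicator (Set.Icc (0 : ℝ) 1) (1 : ℝ → ENNReal)) (ℓ z),
            lintegral_indicator_one measurableSet_Icc]
          simp
      _ = ∫⁻ s : ℝ, ∫⁻ z, K z * Set.indicator (Set.Icc (0 : ℝ) 1) 1 (ℓ z - s) ∂μ := by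
          exact lintegral_lintegral_swap (by fun_prop)
      _ = ∫⁻ s : ℝ, ∫⁻ z, K (z + s • d) * Set.indicator (Set.Icc (0 : ℝ) 1) 1 (ℓ z) ∂μ := by
          refine lintegral_congr fun s => ?_
          rw [← lintegral_add_left_eq_self _ (s • d)]
          simp [hd, add_comm]
      _ = ∫⁻ z, (∫⁻ s : ℝ, K (z + s • d) * Set.indicator (Set.Icc (0 : ℝ) 1) 1 (ℓ z)) ∂μ := by
          exact lintegral_lintegral_swap (by fun_prop)
      _ = _ := by
          refine lintegral_congr fun z => ?_
          rw [lintegral_mul_const _ (by fun_prop), mul_comm]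
  rw [key G hG, key H hH]
  simp only [h]

/-- The Lorentz invariant measure `dp̄ / p⁰` on momentum space. -/
noncomputable def nu (α β : ℝ) : Measure E3 :=
  volume.withDensity fun p => ENNReal.ofReal ((pZ α β p)⁻¹)

instance (α β : ℝ) : SFinite (nu α β) := by unfold nu; infer_instance

lemma nu_prod (α β : ℝ) :
    (nu α β).prod (nu α β) = (volume : Measure (E3 × E3)).withDensity (wgt α β) := by
  have := measurable_pZ α β
  unfold nu
  rw [prod_withDensity (by fun_prop) (by fun_prop)]
  rfl

/-- For fixed `ω` the collision transformation preserves `dp̄ dq̄ / (p⁰ q⁰)`. -/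
lemma map_collT {α β : ℝ} {ω : E3} (hk : mdot α β (omHat α β ω) (omHat α β ω) = 1) :
    ((nu α β).prod (nu α β)).map (collT α β ω) = (nu α β).prod (nu α β) := by
  have hT : Measurable (collT α β ω) := (measurable_collT α β).comp measurable_prodMk_left
  have hw := measurable_wgt α β
  rw [nu_prod]
  refine Measure.ext_of_lintegral _ fun F hF => ?_
  rw [lintegral_map hF hT, lintegral_withDensity_eq_lintegral_mul _ hw (by fun_prop),
    lintegral_withDensity_eq_lintegral_mul _ hw (by fun_prop)]
  obtain ⟨ℓ, hℓ⟩ : ∃ ℓ : E3 × E3 →L[ℝ] ℝ, ℓ (collD α β ω) = 1 := by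
    refine SeparatingDual.exists_eq_one fun h0 => ?_
    have : omHat α β ω = 0 := congrArg Prod.fst h0
    rw [this] at hk
    simp [mdot] at hk
  refine lintegral_eq_of_lines ((volume : Measure E3).prod volume) ℓ hℓ (by fun_prop)
    (by fun_prop) fun z => ?_
  simpa [mul_comm] using lintegral_line hk F z

/-! ### Gain and loss terms -/

instance : IsFiniteMeasure sphMeas := by unfold sphMeas; infer_instance

lemma sphMeas_real_univ : sphMeas.real Set.univ = 4 * π := by
  have h : sphMeas Set.univ = ENNReal.ofReal (4 * π) := by
    unfold sphMeas
    rw [Measure.toSphere_apply_univ, EuclideanSpace.volume_ball_fin_three, finrank_euclideanSpace,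
      Fintype.card_fin]
    simp only [ENNReal.ofReal_one, one_pow, one_mul]
    rw [← ENNReal.ofReal_natCast, ← ENNReal.ofReal_mul (by positivity)]
    congr 1
    push_cast
    ring
  rw [Measure.real, h, ENNReal.toReal_ofReal (by positivity)]

lemma sphere_unit {α β : ℝ} (hα : 0 < α) (hβ : 0 < β) (ω : Metric.sphere (0 : E3) 1) :
    mdot α β (omHat α β ω) (omHat α β ω) = 1 :=
  mdot_omHat_self hα hβ (ne_zero_of_mem_unit_sphere ω)

/-- The phase space of collisions `(ω, p̄, q̄)`. -/
abbrev Coll : Type := Metric.sphere (0 : E3) 1 × (E3 × E3)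

/-- The measure `dω dp̄ dq̄ / (p⁰ q⁰)` on the phase space of collisions. -/
noncomputable def collMeas (α β : ℝ) : Measure Coll := sphMeas.prod ((nu α β).prod (nu α β))

lemma measurable_collT_sphere (α β : ℝ) :
    Measurable fun x : Coll => collT α β x.1 x.2 :=
  (measurable_collT α β).comp ((measurable_subtype_coe.comp measurable_fst).prodMk measurable_snd)

lemma measurePreserving_coll {α β : ℝ} (hα : 0 < α) (hβ : 0 < β) :
    MeasurePreserving (fun x : Coll => ((x.1, collT α β x.1 x.2) : Coll))
      (collMeas α β) (collMeas α β) :=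
  (MeasurePreserving.id sphMeas).skew_product (g := fun ω z => collT α β ω z)
    (measurable_collT_sphere α β) (ae_of_all _ fun ω => map_collT (sphere_unit hα hβ ω))

/-- The loss integrand attached to a two-particle density `F`. -/
noncomputable def lossX (α β : ℝ) (S₀ : E3 → E3 → E3 → E3 → ℝ) (F : E3 × E3 → ℝ) (x : Coll) : ℝ :=
  F x.2 * S₀ x.2.1 x.2.2 (collT α β x.1 x.2).1 (collT α β x.1 x.2).2

/-- The gain integrand attached to a two-particle density `F`. -/
noncomputable def gainX (α β : ℝ) (S₀ : E3 → E3 → E3 → E3 → ℝ) (F : E3 × E3 → ℝ) (x : Coll) : ℝ :=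
  F (collT α β x.1 x.2) * S₀ x.2.1 x.2.2 (collT α β x.1 x.2).1 (collT α β x.1 x.2).2

/-- Microscopic reversibility: by the symmetry of `S₀` and since a collision is an involution, the
gain integrand is the loss integrand evaluated after the collision. -/
lemma gainX_eq {α β : ℝ} (hα : 0 < α) (hβ : 0 < β) {S₀ : E3 → E3 → E3 → E3 → ℝ}
    (hsymm : ∀ p q p' q', S₀ p q p' q' = S₀ p' q' p q) (F : E3 × E3 → ℝ) :
    gainX α β S₀ F = fun x : Coll => lossX α β S₀ F (x.1, collT α β x.1 x.2) := by
  funext x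
  simp only [gainX, lossX, collT_collT (sphere_unit hα hβ x.1)]
  rw [hsymm]

lemma nu_le (α β : ℝ) : nu α β ≤ volume := by
  unfold nu
  conv_rhs => rw [← withDensity_one (μ := (volume : Measure E3))]
  refine withDensity_mono (ae_of_all _ fun p => ?_)
  simpa using inv_le_one_of_one_le₀ (one_le_pZ α β p)

lemma nu_prod_le (α β : ℝ) :
    (nu α β).prod (nu α β) ≤ (volume : Measure E3).prod volume :=
  Measure.prod_mono (nu_le α β) (nu_le α β)

lemma measurable_lossX {α β : ℝ} {S₀ : E3 → E3 → E3 → E3 → ℝ}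
    (hmeas : Measurable fun x : (E3 × E3) × E3 × E3 => S₀ x.1.1 x.1.2 x.2.1 x.2.2)
    {F : E3 × E3 → ℝ} (hF : Measurable F) : Measurable (lossX α β S₀ F) :=
  (hF.comp measurable_snd).mul
    (hmeas.comp (measurable_snd.prodMk (measurable_collT_sphere α β)))

lemma lossX_bound {α β C₁ : ℝ} {S₀ : E3 → E3 → E3 → E3 → ℝ}
    (hnonneg : ∀ p q p' q', 0 ≤ S₀ p q p' q') (hbdd : ∀ p q p' q', S₀ p q p' q' ≤ C₁)
    (F : E3 × E3 → ℝ) (x : Coll) : ‖lossX α β S₀ F x‖ ≤ C₁ * ‖F x.2‖ := by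
  unfold lossX
  rw [norm_mul, Real.norm_of_nonneg (hnonneg _ _ _ _), mul_comm]
  exact mul_le_mul_of_nonneg_right (hbdd _ _ _ _) (norm_nonneg _)

lemma integrable_lossX {α β C₁ : ℝ} {S₀ : E3 → E3 → E3 → E3 → ℝ}
    (hmeas : Measurable fun x : (E3 × E3) × E3 × E3 => S₀ x.1.1 x.1.2 x.2.1 x.2.2)
    (hnonneg : ∀ p q p' q', 0 ≤ S₀ p q p' q') (hbdd : ∀ p q p' q', S₀ p q p' q' ≤ C₁)
    {F : E3 × E3 → ℝ} (hF : Measurable F) (hFi : Integrable F (volume.prod volume)) :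
    Integrable (lossX α β S₀ F) (collMeas α β) ∧
      ∫ x, ‖lossX α β S₀ F x‖ ∂collMeas α β ≤ 4 * π * C₁ * ∫ z, ‖F z‖ ∂(volume.prod volume) := by
  have hC₁ : 0 ≤ C₁ := (hnonneg 0 0 0 0).trans (hbdd 0 0 0 0)
  have h1 : Integrable F ((nu α β).prod (nu α β)) := hFi.mono_measure (nu_prod_le α β)
  have h2 : Integrable (fun x : Coll => C₁ * ‖F x.2‖) (collMeas α β) :=
    (h1.norm.comp_snd sphMeas).const_mul C₁
  have h3 : Integrable (lossX α β S₀ F) (collMeas α β) :=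
    h2.mono' (measurable_lossX hmeas hF).aestronglyMeasurable
      (ae_of_all _ (lossX_bound hnonneg hbdd F))
  refine ⟨h3, ?_⟩
  calc ∫ x, ‖lossX α β S₀ F x‖ ∂collMeas α β ≤ ∫ x : Coll, C₁ * ‖F x.2‖ ∂collMeas α β :=
        integral_mono h3.norm h2 (lossX_bound hnonneg hbdd F)
    _ = 4 * π * C₁ * ∫ z, ‖F z‖ ∂((nu α β).prod (nu α β)) := by
        rw [integral_const_mul, collMeas, integral_fun_snd (fun z => ‖F z‖), sphMeas_real_univ,
          smul_eq_mul]
        ring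
    _ ≤ _ := by
        refine mul_le_mul_of_nonneg_left ?_ (by positivity)
        exact integral_mono_measure (nu_prod_le α β) (ae_of_all _ fun z => norm_nonneg _) hFi.norm

/-- Gain and loss have the same mass, since the collision transformation preserves `collMeas`. -/
lemma integrable_gainX {α β C₁ : ℝ} (hα : 0 < α) (hβ : 0 < β) {S₀ : E3 → E3 → E3 → E3 → ℝ}
    (hmeas : Measurable fun x : (E3 × E3) × E3 × E3 => S₀ x.1.1 x.1.2 x.2.1 x.2.2)
    (hnonneg : ∀ p q p' q', 0 ≤ S₀ p q p' q') (hbdd : ∀ p q p' q', S₀ p q p' q' ≤ C₁)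
    (hsymm : ∀ p q p' q', S₀ p q p' q' = S₀ p' q' p q)
    {F : E3 × E3 → ℝ} (hF : Measurable F) (hFi : Integrable F (volume.prod volume)) :
    Integrable (gainX α β S₀ F) (collMeas α β) ∧
      ∫ x, ‖gainX α β S₀ F x‖ ∂collMeas α β ≤ 4 * π * C₁ * ∫ z, ‖F z‖ ∂(volume.prod volume) ∧
      ∫ x, gainX α β S₀ F x ∂collMeas α β = ∫ x, lossX α β S₀ F x ∂collMeas α β := by
  have hmp := measurePreserving_coll hα hβ
  have hl := measurable_lossX (α := α) (β := β) hmeas hF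
  obtain ⟨h1, h2⟩ := integrable_lossX (α := α) (β := β) hmeas hnonneg hbdd hF hFi
  have hi : ∀ {G : Coll → ℝ}, Measurable G →
      ∫ x : Coll, G (x.1, collT α β x.1 x.2) ∂collMeas α β = ∫ x, G x ∂collMeas α β := by
    intro G hG
    conv_rhs => rw [← hmp.map_eq]
    rw [integral_map hmp.measurable.aemeasurable hG.aestronglyMeasurable]
  rw [gainX_eq hα hβ hsymm]
  exact ⟨hmp.integrable_comp_of_integrable h1, (hi hl.norm).trans_le h2, hi hl⟩

/-- Integration over `q̄` (with weight `1/q⁰`) and `ω`. -/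
noncomputable def collJ (α β : ℝ) (X : Coll → ℝ) (p : E3) : ℝ :=
  ∫ q, ∫ ω, X (ω, (p, q)) ∂sphMeas ∂nu α β

lemma integral_norm_integral_le {A B : Type*} [MeasurableSpace A] [MeasurableSpace B]
    {μ : Measure A} {μ' : Measure B} [SFinite μ] [SFinite μ'] {H : A × B → ℝ}
    (hH : Integrable H (μ.prod μ')) :
    ∫ x, ‖∫ y, H (x, y) ∂μ'‖ ∂μ ≤ ∫ z, ‖H z‖ ∂(μ.prod μ') := by
  rw [integral_prod _ hH.norm]
  exact integral_mono hH.integral_prod_left.norm hH.integral_norm_prod_left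
    fun x => norm_integral_le_integral_norm _

lemma collJ_fubini {α β : ℝ} {X : Coll → ℝ} (hX : Integrable X (collMeas α β)) :
    Integrable (collJ α β X) (nu α β) ∧ ∫ p, collJ α β X p ∂nu α β = ∫ x, X x ∂collMeas α β ∧
      ∫ p, ‖collJ α β X p‖ ∂nu α β ≤ ∫ x, ‖X x‖ ∂collMeas α β := by
  have h1 : Integrable (fun z => ∫ ω, X (ω, z) ∂sphMeas) ((nu α β).prod (nu α β)) :=
    hX.integral_prod_right
  refine ⟨h1.integral_prod_left, ?_, ?_⟩
  · rw [collMeas, integral_prod_symm _ hX, integral_prod _ h1]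
    rfl
  · refine (integral_norm_integral_le h1).trans ?_
    refine (integral_norm_integral_le hX.swap).trans_eq ?_
    exact integral_prod_swap (fun x : Coll => ‖X x‖)

lemma collJ_sub {α β : ℝ} {X Y : Coll → ℝ} (hX : Integrable X (collMeas α β))
    (hY : Integrable Y (collMeas α β)) :
    ∀ᵐ p ∂nu α β, collJ α β (fun x => X x - Y x) p = collJ α β X p - collJ α β Y p := by
  have hX1 : Integrable (fun z => ∫ ω, X (ω, z) ∂sphMeas) ((nu α β).prod (nu α β)) :=
    hX.integral_prod_right
  have hY1 : Integrable (fun z => ∫ ω, Y (ω, z) ∂sphMeas) ((nu α β).prod (nu α β)) :=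
    hY.integral_prod_right
  have h : ∀ᵐ z ∂(nu α β).prod (nu α β), ∫ ω, (X (ω, z) - Y (ω, z)) ∂sphMeas =
      ∫ ω, X (ω, z) ∂sphMeas - ∫ ω, Y (ω, z) ∂sphMeas := by
    filter_upwards [hX.prod_left_ae, hY.prod_left_ae] with z h1 h2
    exact integral_sub h1 h2
  filter_upwards [Measure.ae_ae_of_ae_prod h, hX1.prod_right_ae, hY1.prod_right_ae]
    with p h1 h2 h3
  unfold collJ
  rw [integral_congr_ae h1]
  exact integral_sub h2 h3

lemma measurable_weight (α β : ℝ) :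
    Measurable fun p => ENNReal.ofReal ((pZ α β p)⁻¹) := by
  have := measurable_pZ α β
  fun_prop

lemma integral_nu (α β : ℝ) (h : E3 → ℝ) :
    ∫ p, h p ∂nu α β = ∫ p, (pZ α β p)⁻¹ * h p := by
  unfold nu
  rw [integral_withDensity_eq_integral_toReal_smul (measurable_weight α β) (by simp)]
  refine integral_congr_ae (ae_of_all _ fun p => ?_)
  simp only [smul_eq_mul]
  rw [ENNReal.toReal_ofReal (inv_nonneg.mpr (pZ_pos α β p).le)]

lemma integrable_nu (α β : ℝ) (h : E3 → ℝ) :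
    Integrable h (nu α β) ↔ Integrable fun p => (pZ α β p)⁻¹ * h p := by
  unfold nu
  rw [integrable_withDensity_iff_integrable_smul' (measurable_weight α β) (by simp)]
  refine integrable_congr (ae_of_all _ fun p => ?_)
  simp only [smul_eq_mul]
  rw [ENNReal.toReal_ofReal (inv_nonneg.mpr (pZ_pos α β p).le)]

lemma ae_nu (α β : ℝ) {P : E3 → Prop} (h : ∀ᵐ p ∂nu α β, P p) : ∀ᵐ p, P p := by
  unfold nu at h
  rw [ae_withDensity_iff (measurable_weight α β)] at h
  filter_upwards [h] with p hp
  exact hp (by simpa using pZ_pos α β p)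

lemma Qcoll_eq (α β : ℝ) (S₀ : E3 → E3 → E3 → E3 → ℝ) (f g : E3 → ℝ) (p : E3) :
    Qcoll α β S₀ f g p = α * β ^ 2 * (collJ α β (gainX α β S₀ fun z => f z.1 * g z.2) p -
      collJ α β (lossX α β S₀ fun z => f z.1 * g z.2) p) := by
  unfold Qcoll Qplus Qminus collJ
  rw [integral_nu, integral_nu, mul_sub]
  rfl

section

variable {α β C₁ : ℝ} {S₀ : E3 → E3 → E3 → E3 → ℝ}

/-- Conservation of the particle number: `Q(h,h)/p⁰` is integrable with integral zero. -/
lemma Qcoll_mass (hα : 0 < α) (hβ : 0 < β)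
    (hmeas : Measurable fun x : (E3 × E3) × E3 × E3 => S₀ x.1.1 x.1.2 x.2.1 x.2.2)
    (hnonneg : ∀ p q p' q', 0 ≤ S₀ p q p' q') (hbdd : ∀ p q p' q', S₀ p q p' q' ≤ C₁)
    (hsymm : ∀ p q p' q', S₀ p q p' q' = S₀ p' q' p q) (h : L1) :
    Integrable (fun p => (pZ α β p)⁻¹ * Qcoll α β S₀ h h p) ∧
      ∫ p, (pZ α β p)⁻¹ * Qcoll α β S₀ h h p = 0 := by
  have hm : Measurable (h : E3 → ℝ) := (Lp.stronglyMeasurable h).measurable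
  have hi : Integrable (h : E3 → ℝ) := L1.integrable_coeFn h
  have hF : Measurable fun z : E3 × E3 => h z.1 * h z.2 := by fun_prop
  have hFi : Integrable (fun z : E3 × E3 => h z.1 * h z.2) (volume.prod volume) := hi.mul_prod hi
  obtain ⟨l1, -⟩ := integrable_lossX (α := α) (β := β) hmeas hnonneg hbdd hF hFi
  obtain ⟨g1, -, g3⟩ := integrable_gainX hα hβ hmeas hnonneg hbdd hsymm hF hFi
  obtain ⟨jl1, jl2, -⟩ := collJ_fubini l1
  obtain ⟨jg1, jg2, -⟩ := collJ_fubini g1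
  rw [← integrable_nu, ← integral_nu]
  have he : Qcoll α β S₀ h h = fun p => α * β ^ 2 *
      (collJ α β (gainX α β S₀ fun z => h z.1 * h z.2) p -
        collJ α β (lossX α β S₀ fun z => h z.1 * h z.2) p) := funext (Qcoll_eq α β S₀ h h)
  rw [he]
  refine ⟨(jg1.sub jl1).const_mul _, ?_⟩
  rw [integral_const_mul, integral_sub jg1 jl1, jg2, jl2, g3, sub_self, mul_zero]

/-- The local Lipschitz estimate for `h ↦ Q(h,h)/p⁰` in `L¹`, with the factor `2` coming from gain
and loss, each of which is bounded by `4 π C₁ α β²` times the norm of the two-particle density. -/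
lemma Qcoll_diff (hα : 0 < α) (hβ : 0 < β)
    (hmeas : Measurable fun x : (E3 × E3) × E3 × E3 => S₀ x.1.1 x.1.2 x.2.1 x.2.2)
    (hnonneg : ∀ p q p' q', 0 ≤ S₀ p q p' q') (hbdd : ∀ p q p' q', S₀ p q p' q' ≤ C₁)
    (hsymm : ∀ p q p' q', S₀ p q p' q' = S₀ p' q' p q) (h k : L1) :
    ∫ p, ‖(pZ α β p)⁻¹ * Qcoll α β S₀ h h p - (pZ α β p)⁻¹ * Qcoll α β S₀ k k p‖ ≤
      2 * (4 * π * C₁ * α * β ^ 2) * ((‖h‖ + ‖k‖) * ‖h - k‖) := by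
  have hC₁ : 0 ≤ C₁ := (hnonneg 0 0 0 0).trans (hbdd 0 0 0 0)
  have hm : Measurable (h : E3 → ℝ) := (Lp.stronglyMeasurable h).measurable
  have hi : Integrable (h : E3 → ℝ) := L1.integrable_coeFn h
  have km : Measurable (k : E3 → ℝ) := (Lp.stronglyMeasurable k).measurable
  have ki : Integrable (k : E3 → ℝ) := L1.integrable_coeFn k
  set F : E3 × E3 → ℝ := fun z => h z.1 * h z.2 with hFdef
  set G : E3 × E3 → ℝ := fun z => k z.1 * k z.2 with hGdef
  have hF : Measurable F := by fun_prop
  have hFi : Integrable F (volume.prod volume) := hi.mul_prod hi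
  have hG : Measurable G := by fun_prop
  have hGi : Integrable G (volume.prod volume) := ki.mul_prod ki
  have hFG : Measurable fun z => F z - G z := hF.sub hG
  have hFGi : Integrable (fun z => F z - G z) (volume.prod volume) := hFi.sub hGi
  obtain ⟨lF, -⟩ := integrable_lossX (α := α) (β := β) hmeas hnonneg hbdd hF hFi
  obtain ⟨gF, -, -⟩ := integrable_gainX hα hβ hmeas hnonneg hbdd hsymm hF hFi
  obtain ⟨lG, -⟩ := integrable_lossX (α := α) (β := β) hmeas hnonneg hbdd hG hGi
  obtain ⟨gG, -, -⟩ := integrable_gainX hα hβ hmeas hnonneg hbdd hsymm hG hGi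
  obtain ⟨lD, lD2⟩ := integrable_lossX (α := α) (β := β) hmeas hnonneg hbdd hFG hFGi
  obtain ⟨gD, gD2, -⟩ := integrable_gainX hα hβ hmeas hnonneg hbdd hsymm hFG hFGi
  obtain ⟨jl1, -, jl2⟩ := collJ_fubini lD
  obtain ⟨jg1, -, jg2⟩ := collJ_fubini gD
  -- the tensor products satisfy `‖h⊗h − k⊗k‖ ≤ (‖h‖ + ‖k‖) ‖h − k‖`
  have hnorm : ∫ z, ‖F z - G z‖ ∂(volume.prod volume) ≤ (‖h‖ + ‖k‖) * ‖h - k‖ := by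
    have hd : Integrable fun p => h p - k p := hi.sub ki
    have e1 : ‖h - k‖ = ∫ p, ‖h p - k p‖ := by
      rw [L1.norm_eq_integral_norm]
      refine integral_congr_ae ?_
      filter_upwards [Lp.coeFn_sub h k] with p hp
      rw [hp, Pi.sub_apply]
    rw [e1, L1.norm_eq_integral_norm, L1.norm_eq_integral_norm]
    have i1 : Integrable (fun z : E3 × E3 => ‖h z.1 - k z.1‖ * ‖h z.2‖) (volume.prod volume) :=
      hd.norm.mul_prod hi.norm
    have i2 : Integrable (fun z : E3 × E3 => ‖k z.1‖ * ‖h z.2 - k z.2‖) (volume.prod volume) :=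
      ki.norm.mul_prod hd.norm
    calc ∫ z, ‖F z - G z‖ ∂(volume.prod volume)
        ≤ ∫ z : E3 × E3, (‖h z.1 - k z.1‖ * ‖h z.2‖ + ‖k z.1‖ * ‖h z.2 - k z.2‖)
            ∂(volume.prod volume) := by
          refine integral_mono hFGi.norm (i1.add i2) fun z => ?_
          simp only [F, G]
          rw [← norm_mul, ← norm_mul, show h z.1 * h z.2 - k z.1 * k z.2 =
            (h z.1 - k z.1) * h z.2 + k z.1 * (h z.2 - k z.2) by ring]
          exact norm_add_le _ _
      _ = _ := by
          rw [integral_add i1 i2,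
            integral_prod_mul (fun p => ‖h p - k p‖) (fun p => ‖h p‖),
            integral_prod_mul (fun p => ‖k p‖) (fun p => ‖h p - k p‖)]
          ring
  have hgd : (fun x => gainX α β S₀ F x - gainX α β S₀ G x) =
      gainX α β S₀ fun z => F z - G z := by
    funext x; simp only [gainX]; ring
  have hld : (fun x => lossX α β S₀ F x - lossX α β S₀ G x) =
      lossX α β S₀ fun z => F z - G z := by
    funext x; simp only [lossX]; ring
  have sg := collJ_sub gF gG
  have sl := collJ_sub lF lG
  rw [hgd] at sg
  rw [hld] at sl
  have hae : ∀ᵐ p, ‖(pZ α β p)⁻¹ * Qcoll α β S₀ h h p - (pZ α β p)⁻¹ * Qcoll α β S₀ k k p‖ =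
      (pZ α β p)⁻¹ * ‖α * β ^ 2 * (collJ α β (gainX α β S₀ fun z => F z - G z) p -
        collJ α β (lossX α β S₀ fun z => F z - G z) p)‖ := by
    filter_upwards [ae_nu α β sg, ae_nu α β sl] with p h1 h2
    rw [← mul_sub, norm_mul, Real.norm_of_nonneg (inv_nonneg.mpr (pZ_pos α β p).le), Qcoll_eq,
      Qcoll_eq, h1, h2]
    congr 2
    ring
  rw [integral_congr_ae hae, ← integral_nu]
  have hab : 0 ≤ α * β ^ 2 := by positivity
  calc ∫ p, ‖α * β ^ 2 * (collJ α β (gainX α β S₀ fun z => F z - G z) p -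
        collJ α β (lossX α β S₀ fun z => F z - G z) p)‖ ∂nu α β
      ≤ ∫ p, α * β ^ 2 * (‖collJ α β (gainX α β S₀ fun z => F z - G z) p‖ +
        ‖collJ α β (lossX α β S₀ fun z => F z - G z) p‖) ∂nu α β := by
        refine integral_mono ((jg1.sub jl1).const_mul _).norm
          ((jg1.norm.add jl1.norm).const_mul _) fun p => ?_
        simp only [norm_mul (α * β ^ 2), Real.norm_of_nonneg hab]
        exact mul_le_mul_of_nonneg_left (norm_sub_le _ _) hab
    _ ≤ α * β ^ 2 * (4 * π * C₁ * ((‖h‖ + ‖k‖) * ‖h - k‖) +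
          4 * π * C₁ * ((‖h‖ + ‖k‖) * ‖h - k‖)) := by
        rw [integral_const_mul, integral_add jg1.norm jl1.norm]
        have hc : 0 ≤ 4 * π * C₁ := by positivity
        have := mul_le_mul_of_nonneg_left hnorm hc
        exact mul_le_mul_of_nonneg_left (by linarith) hab
    _ = _ := by ring

end

/-! ### The resolvent equation -/

lemma norm_eq_integral_of_nonneg {u : L1} (hu : 0 ≤ᵐ[volume] ⇑u) : ‖u‖ = ∫ p, u p := by
  rw [L1.norm_eq_integral_norm]
  refine integral_congr_ae ?_
  filter_upwards [hu] with p hp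
  exact Real.norm_of_nonneg hp

section Resolvent

variable {α β C₁ : ℝ} {S₀ : E3 → E3 → E3 → E3 → ℝ}

/-- Integrating the resolvent equation `m h - Q(h,h)/p⁰ = u` removes the collision term. -/
lemma resolvent_norm (hα : 0 < α) (hβ : 0 < β)
    (hmeas : Measurable fun x : (E3 × E3) × E3 × E3 => S₀ x.1.1 x.1.2 x.2.1 x.2.2)
    (hnonneg : ∀ p q p' q', 0 ≤ S₀ p q p' q') (hbdd : ∀ p q p' q', S₀ p q p' q' ≤ C₁)
    (hsymm : ∀ p q p' q', S₀ p q p' q' = S₀ p' q' p q) {m : ℝ} {u h : L1}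
    (hu : 0 ≤ᵐ[volume] ⇑u) (hh : 0 ≤ᵐ[volume] ⇑h)
    (heq : (fun p : E3 => m * h p - (pZ α β p)⁻¹ * Qcoll α β S₀ h h p) =ᵐ[volume] ⇑u) :
    m * ‖h‖ = ‖u‖ := by
  obtain ⟨h1, h2⟩ := Qcoll_mass hα hβ hmeas hnonneg hbdd hsymm h
  rw [norm_eq_integral_of_nonneg hu, norm_eq_integral_of_nonneg hh, ← integral_congr_ae heq,
    integral_sub ((L1.integrable_coeFn h).const_mul m) h1, h2, sub_zero, integral_const_mul]

/-- If `h`, `k` solve the resolvent equation with right-hand sides `u`, `v`, then the difference of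
the collision terms is at most `(2/3) m ‖h - k‖`, which is absorbed in the left-hand side. -/
lemma resolvent_lipschitz (hα : 0 < α) (hβ : 0 < β)
    (hmeas : Measurable fun x : (E3 × E3) × E3 × E3 => S₀ x.1.1 x.1.2 x.2.1 x.2.2)
    (hnonneg : ∀ p q p' q', 0 ≤ S₀ p q p' q') (hbdd : ∀ p q p' q', S₀ p q p' q' ≤ C₁)
    (hsymm : ∀ p q p' q', S₀ p q p' q' = S₀ p' q' p q) {m r : ℝ} (hm : 0 ≤ m)
    (hr : 4 * (4 * π * C₁ * α * β ^ 2) * r ≤ 2 / 3 * m) {u v h k : L1}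
    (hh : ‖h‖ ≤ r) (hk : ‖k‖ ≤ r)
    (hu : (fun p : E3 => m * h p - (pZ α β p)⁻¹ * Qcoll α β S₀ h h p) =ᵐ[volume] ⇑u)
    (hv : (fun p : E3 => m * k p - (pZ α β p)⁻¹ * Qcoll α β S₀ k k p) =ᵐ[volume] ⇑v) :
    m * ‖h - k‖ ≤ 3 * ‖u - v‖ := by
  have hC₁ : 0 ≤ C₁ := (hnonneg 0 0 0 0).trans (hbdd 0 0 0 0)
  obtain ⟨h1, -⟩ := Qcoll_mass hα hβ hmeas hnonneg hbdd hsymm h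
  obtain ⟨k1, -⟩ := Qcoll_mass hα hβ hmeas hnonneg hbdd hsymm k
  have hd := Qcoll_diff hα hβ hmeas hnonneg hbdd hsymm h k
  have huvi := L1.integrable_coeFn (u - v)
  have hq : Integrable fun p => (pZ α β p)⁻¹ * Qcoll α β S₀ h h p -
      (pZ α β p)⁻¹ * Qcoll α β S₀ k k p := h1.sub k1
  have key : m * ‖h - k‖ ≤ ‖u - v‖ +
      ∫ p, ‖(pZ α β p)⁻¹ * Qcoll α β S₀ h h p - (pZ α β p)⁻¹ * Qcoll α β S₀ k k p‖ := by
    rw [L1.norm_eq_integral_norm, L1.norm_eq_integral_norm, ← integral_const_mul,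
      ← integral_add huvi.norm hq.norm]
    refine integral_mono_ae ((L1.integrable_coeFn (h - k)).norm.const_mul m)
      (huvi.norm.add hq.norm) ?_
    filter_upwards [hu, hv, Lp.coeFn_sub h k, Lp.coeFn_sub u v] with p e1 e2 e3 e4
    simp only [e3, e4, Pi.sub_apply, ← e1, ← e2]
    rw [← Real.norm_of_nonneg hm, ← norm_mul, Real.norm_of_nonneg hm]
    refine le_trans (le_of_eq ?_) (norm_add_le _ _)
    congr 1
    ring
  have hc : 0 ≤ 4 * π * C₁ * α * β ^ 2 := by positivity
  have hb : 2 * (4 * π * C₁ * α * β ^ 2) * ((‖h‖ + ‖k‖) * ‖h - k‖) ≤ 2 / 3 * m * ‖h - k‖ := by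
    have : 2 * (4 * π * C₁ * α * β ^ 2) * (‖h‖ + ‖k‖) ≤ 2 / 3 * m := by nlinarith
    calc _ = 2 * (4 * π * C₁ * α * β ^ 2) * (‖h‖ + ‖k‖) * ‖h - k‖ := by ring
      _ ≤ _ := mul_le_mul_of_nonneg_right this (norm_nonneg _)
  linarith

end Resolvent

/-! ### The Picard map -/

lemma memX_iff {r : ℝ} {f : L1} : memX r f ↔ 0 ≤ f ∧ ‖f‖ ≤ r := by
  rw [memX, Lp.coeFn_nonneg]

lemma memX.mono {r r' : ℝ} {f : L1} (h : memX r f) (hr : r ≤ r') : memX r' f :=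
  ⟨h.1, h.2.trans hr⟩

lemma isClosed_memX (r : ℝ) : IsClosed {f : L1 | memX r f} := by
  simp only [memX_iff]
  have h1 : IsClosed {f : L1 | 0 ≤ f} := isClosed_Ici
  have h2 : IsClosed {f : L1 | ‖f‖ ≤ r} := isClosed_le continuous_norm continuous_const
  exact h1.inter h2

lemma L1_smul_nonneg {c : ℝ} (hc : 0 ≤ c) {f : L1} (hf : 0 ≤ f) : 0 ≤ c • f := by
  rw [← Lp.coeFn_nonneg] at hf ⊢
  filter_upwards [hf, Lp.coeFn_smul c f] with p h1 h2
  rw [h2]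
  exact mul_nonneg hc h1

instance : IsOrderedModule ℝ L1 :=
  IsOrderedModule.of_smul_nonneg fun _ hc _ hf => L1_smul_nonneg hc hf

section Picard

variable {n δ r ρ : ℝ} {A : L1 → L1} {g : L1}

/-- The Picard map of the mild equation `f(t) = e^{-nt} g + ∫₀ᵗ n e^{-n(t-s)} A(f(s)) ds`; in the
application `A = √n R_n`. -/
noncomputable def picard (n : ℝ) (A : L1 → L1) (g : L1) (f : ℝ → L1) (t : ℝ) : L1 :=
  Real.exp (-n * t) • g + ∫ s in (0 : ℝ)..t, (n * Real.exp (-n * (t - s))) • A (f s)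

lemma integral_kernel (n t : ℝ) :
    ∫ s in (0 : ℝ)..t, n * Real.exp (-n * (t - s)) = 1 - Real.exp (-n * t) := by
  have hd : ∀ s, HasDerivAt (fun s => Real.exp (-n * (t - s))) (n * Real.exp (-n * (t - s))) s := by
    intro s
    have h := (((hasDerivAt_id s).const_sub t).const_mul (-n)).exp
    refine h.congr_deriv ?_
    simp only [id]
    ring
  rw [intervalIntegral.integral_eq_sub_of_hasDerivAt (fun s _ => hd s)
    (Continuous.intervalIntegrable (by fun_prop) _ _)]
  simp

lemma picard_continuous {f : ℝ → L1} (hf : Continuous fun s => A (f s)) :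
    Continuous (picard n A g f) := by
  have h : picard n A g f = fun t => Real.exp (-n * t) • g +
      Real.exp (-n * t) • ∫ s in (0 : ℝ)..t, (n * Real.exp (n * s)) • A (f s) := by
    funext t
    unfold picard
    congr 1
    rw [← intervalIntegral.integral_smul]
    refine intervalIntegral.integral_congr fun s _ => ?_
    simp only [smul_smul]
    congr 1
    rw [mul_left_comm, ← Real.exp_add]
    congr 2
    ring
  -- with the factor `e^{-nt}` taken out, the integrand no longer depends on `t`
  rw [h]
  have : Continuous fun t => ∫ s in (0 : ℝ)..t, (n * Real.exp (n * s)) • A (f s) :=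
    intervalIntegral.continuous_primitive
      (fun a b => Continuous.intervalIntegrable
        ((by fun_prop : Continuous fun s => n * Real.exp (n * s)).smul hf) _ _) 0
  fun_prop

/-- If `A` does not increase norms, the Picard map preserves the bound `ρ` on the norm of `g`:
its value is an average of `g` and the `A (f s)`, because the kernel has total mass
`1 - e^{-nt}`. -/
lemma picard_memX (hn : 0 ≤ n) (hρr : ρ ≤ r) (hA : ∀ u, memX r u → memX ‖u‖ (A u))
    (hg : memX ρ g) {f : ℝ → L1} (hfX : ∀ s, memX ρ (f s))
    {t : ℝ} (ht : 0 ≤ t) : memX ρ (picard n A g f t) := by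
  have hAf : ∀ s, memX ρ (A (f s)) := fun s =>
    (hA _ ((hfX s).mono hρr)).mono (hfX s).2
  rw [memX_iff] at hg ⊢
  constructor
  · refine add_nonneg (L1_smul_nonneg (Real.exp_pos _).le hg.1) ?_
    rw [intervalIntegral.integral_of_le ht]
    exact integral_nonneg fun s => L1_smul_nonneg (by positivity) (memX_iff.mp (hAf s)).1
  · have h1 : ‖∫ s in (0 : ℝ)..t, (n * Real.exp (-n * (t - s))) • A (f s)‖ ≤
        ∫ s in (0 : ℝ)..t, n * Real.exp (-n * (t - s)) * ρ := by
      refine intervalIntegral.norm_integral_le_of_norm_le ht (ae_of_all _ fun s _ => ?_)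
        (Continuous.intervalIntegrable (by fun_prop) _ _)
      rw [norm_smul, Real.norm_of_nonneg (by positivity)]
      exact mul_le_mul_of_nonneg_left (hAf s).2 (by positivity)
    rw [intervalIntegral.integral_mul_const, integral_kernel] at h1
    calc ‖picard n A g f t‖ ≤ Real.exp (-n * t) * ‖g‖ + (1 - Real.exp (-n * t)) * ρ := by
          refine (norm_add_le _ _).trans (add_le_add (le_of_eq ?_) h1)
          rw [norm_smul, Real.norm_of_nonneg (Real.exp_pos _).le]
      _ ≤ Real.exp (-n * t) * ρ + (1 - Real.exp (-n * t)) * ρ := by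
          have := mul_le_mul_of_nonneg_left hg.2 (Real.exp_pos (-n * t)).le
          linarith
      _ = ρ := by ring

/-- On `[0, 1/(4n)]` the kernel has mass at most `1/4`, so for a 3-Lipschitz `A` the Picard map
contracts the supremum distance by `3/4`. -/
lemma picard_contract (hn : 0 < n)
    (hL : ∀ u v, memX r u → memX r v → ‖A u - A v‖ ≤ 3 * ‖u - v‖)
    {f f' : ℝ → L1} (hf : Continuous fun s => A (f s)) (hf' : Continuous fun s => A (f' s))
    (hfX : ∀ s, memX r (f s)) (hfX' : ∀ s, memX r (f' s)) {d : ℝ} (hd : ∀ s, ‖f s - f' s‖ ≤ d)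
    {t : ℝ} (ht : t ∈ Set.Icc 0 (1 / (4 * n))) :
    ‖picard n A g f t - picard n A g f' t‖ ≤ 3 / 4 * d := by
  have hd0 : 0 ≤ d := (norm_nonneg _).trans (hd 0)
  unfold picard
  have hker : Continuous fun s => n * Real.exp (-n * (t - s)) := by fun_prop
  have hk : Continuous fun s => (n * Real.exp (-n * (t - s))) • A (f s) := hker.smul hf
  have hk' : Continuous fun s => (n * Real.exp (-n * (t - s))) • A (f' s) := hker.smul hf'
  rw [add_sub_add_left_eq_sub, ← intervalIntegral.integral_sub
    (hk.intervalIntegrable _ _) (hk'.intervalIntegrable _ _)]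
  have h1 : ‖∫ s in (0 : ℝ)..t, ((n * Real.exp (-n * (t - s))) • A (f s) -
      (n * Real.exp (-n * (t - s))) • A (f' s))‖ ≤ n * (3 * d) * |t - 0| := by
    refine intervalIntegral.norm_integral_le_of_norm_le_const fun s hs => ?_
    rw [Set.uIoc_of_le ht.1] at hs
    rw [← smul_sub, norm_smul, Real.norm_of_nonneg (by positivity)]
    have he : Real.exp (-n * (t - s)) ≤ 1 := by
      rw [Real.exp_le_one_iff]
      nlinarith [hs.2]
    have h2 : ‖A (f s) - A (f' s)‖ ≤ 3 * d := (hL _ _ (hfX s) (hfX' s)).trans (by linarith [hd s])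
    refine mul_le_mul ?_ h2 (norm_nonneg _) hn.le
    nlinarith
  refine h1.trans ?_
  rw [sub_zero, abs_of_nonneg ht.1]
  have h3 : n * t ≤ 1 / 4 := by
    have := (le_div_iff₀ (by positivity)).mp ht.2
    linarith
  nlinarith

lemma continuous_comp_A (hL : ∀ u v, memX r u → memX r v → ‖A u - A v‖ ≤ 3 * ‖u - v‖)
    {f : ℝ → L1} (hf : Continuous f) (hfX : ∀ s, memX r (f s)) : Continuous fun s => A (f s) := by
  have hlip : LipschitzOnWith 3 A {u | memX r u} := LipschitzOnWith.of_dist_le_mul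
    fun u hu v hv => by simpa [dist_eq_norm] using hL u v hu hv
  exact hlip.continuousOn.comp_continuous hf hfX

/-- Banach's fixed point theorem on the continuous maps from `[0, 1/(4n)]` to `X_ρ`; the solution is
returned as a function on `ℝ`, extended by constants. -/
lemma picard_fixedPoint (hn : 0 < n) (hδ : (0 : ℝ) ≤ 1 / (4 * n)) (hρr : ρ ≤ r)
    (hA : ∀ u, memX r u → memX ‖u‖ (A u))
    (hL : ∀ u v, memX r u → memX r v → ‖A u - A v‖ ≤ 3 * ‖u - v‖) (hg : memX ρ g) :
    ∃ f : ℝ → L1, Continuous f ∧ (∀ s, memX ρ (f s)) ∧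
      ∀ t ∈ Set.Icc 0 (1 / (4 * n)), f t = picard n A g f t := by
  let S : Set C(Set.Icc (0 : ℝ) (1 / (4 * n)), L1) := {f | ∀ t, memX ρ (f t)}
  have hS : IsClosed S := by
    have : S = ⋂ t, (fun f : C(Set.Icc (0 : ℝ) (1 / (4 * n)), L1) => f t) ⁻¹' {u | memX ρ u} := by
      ext f; simp [S]
    rw [this]
    exact isClosed_iInter fun t => (isClosed_memX ρ).preimage (by fun_prop)
  have : CompleteSpace S := hS.completeSpace_coe
  have : Nonempty S := ⟨⟨ContinuousMap.const _ g, fun _ => hg⟩⟩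
  have hc : ∀ f : S, Continuous (Set.IccExtend hδ f.1) := fun f => f.1.continuous.Icc_extend'
  have hX : ∀ (f : S) (s : ℝ), memX ρ (Set.IccExtend hδ f.1 s) := fun f s => f.2 _
  have hcA : ∀ f : S, Continuous fun s => A (Set.IccExtend hδ f.1 s) := fun f =>
    continuous_comp_A hL (hc f) fun s => (hX f s).mono hρr
  let Φ : S → S := fun f =>
    ⟨⟨fun t => picard n A g (Set.IccExtend hδ f.1) t,
      (picard_continuous (hcA f)).comp continuous_subtype_val⟩,
      fun t => picard_memX hn.le hρr hA hg (hX f) t.2.1⟩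
  have hΦ : ContractingWith (3 / 4) Φ := by
    refine ⟨by rw [← NNReal.coe_lt_coe]; norm_num, LipschitzWith.of_dist_le_mul fun f f' => ?_⟩
    rw [Subtype.dist_eq, Subtype.dist_eq, ContinuousMap.dist_le (by positivity)]
    intro t
    rw [dist_eq_norm]
    refine (picard_contract hn hL (hcA f) (hcA f') (fun s => (hX f s).mono hρr)
      (fun s => (hX f' s).mono hρr) (d := dist f.1 f'.1) (fun s => ?_) t.2).trans_eq (by norm_num)
    rw [← dist_eq_norm]
    exact ContinuousMap.dist_apply_le_dist _
  have hfix := hΦ.fixedPoint_isFixedPt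
  set f := hΦ.fixedPoint
  refine ⟨Set.IccExtend hδ f.1, hc f, hX f, fun t ht => ?_⟩
  rw [Set.IccExtend_of_mem hδ _ ht]
  exact (congrArg (fun φ : S => φ.1 ⟨t, ht⟩) hfix).symm

/-- At a point where the distance of two solutions is maximal, it is at most `3/4` of itself. -/
lemma picard_unique (hn : 0 < n) (hδ : (0 : ℝ) ≤ 1 / (4 * n))
    (hL : ∀ u v, memX r u → memX r v → ‖A u - A v‖ ≤ 3 * ‖u - v‖) {f f' : ℝ → L1}
    (hf : ContinuousOn f (Set.Icc 0 (1 / (4 * n)))) (hf' : ContinuousOn f' (Set.Icc 0 (1 / (4 * n))))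
    (hfX : ∀ t ∈ Set.Icc 0 (1 / (4 * n)), memX r (f t))
    (hfX' : ∀ t ∈ Set.Icc 0 (1 / (4 * n)), memX r (f' t))
    (he : ∀ t ∈ Set.Icc 0 (1 / (4 * n)), f t = picard n A g f t)
    (he' : ∀ t ∈ Set.Icc 0 (1 / (4 * n)), f' t = picard n A g f' t) :
    ∀ t ∈ Set.Icc 0 (1 / (4 * n)), f' t = f t := by
  -- both solutions are replaced by continuous extensions, constant outside the interval
  have hP : ∀ φ : ℝ → L1, ∀ t ∈ Set.Icc 0 (1 / (4 * n)), picard n A g φ t =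
      picard n A g (fun s => φ (Set.projIcc 0 (1 / (4 * n)) hδ s)) t := by
    intro φ t ht
    unfold picard
    congr 1
    refine intervalIntegral.integral_congr fun s hs => ?_
    rw [Set.uIcc_of_le ht.1] at hs
    simp only [Set.projIcc_of_mem hδ ⟨hs.1, hs.2.trans ht.2⟩]
  have hC : ∀ φ : ℝ → L1, ContinuousOn φ (Set.Icc 0 (1 / (4 * n))) →
      Continuous fun s => φ (Set.projIcc 0 (1 / (4 * n)) hδ s) := fun φ hφ =>
    hφ.comp_continuous (continuous_subtype_val.comp continuous_projIcc) fun s => Subtype.coe_prop _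
  have hcf := hC f hf
  have hcf' := hC f' hf'
  obtain ⟨t₀, ht₀, hmax⟩ := isCompact_Icc.exists_isMaxOn (Set.nonempty_Icc.mpr hδ)
    (hf.sub hf').norm
  have hb : ‖f t₀ - f' t₀‖ ≤ 3 / 4 * ‖f t₀ - f' t₀‖ := by
    conv_lhs => rw [he t₀ ht₀, he' t₀ ht₀, hP f t₀ ht₀, hP f' t₀ ht₀]
    exact picard_contract hn hL
      (continuous_comp_A hL hcf fun s => hfX _ (Subtype.coe_prop _))
      (continuous_comp_A hL hcf' fun s => hfX' _ (Subtype.coe_prop _))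
      (fun s => hfX _ (Subtype.coe_prop _)) (fun s => hfX' _ (Subtype.coe_prop _))
      (fun s => hmax (Subtype.coe_prop _)) ht₀
  intro t ht
  have h0 : ‖f t - f' t‖ ≤ ‖f t₀ - f' t₀‖ := hmax ht
  have h1 : ‖f t - f' t‖ = 0 := le_antisymm (by linarith) (norm_nonneg _)
  exact (sub_eq_zero.mp (norm_eq_zero.mp h1)).symm

end Picard

theorem statement_18
    (C₀ C₁ α β : ℝ) (hC₀ : 0 < C₀) (hC₁ : 0 < C₁) (hα : C₀ ≤ α) (hβ : C₀ ≤ β)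
    (S₀ : E3 → E3 → E3 → E3 → ℝ)
    (hS₀meas : Measurable fun x : (E3 × E3) × E3 × E3 => S₀ x.1.1 x.1.2 x.2.1 x.2.2)
    (hS₀nonneg : ∀ p q p' q', 0 ≤ S₀ p q p' q')
    (hS₀bdd : ∀ p q p' q', S₀ p q p' q' ≤ C₁)
    (hS₀symm : ∀ p q p' q', S₀ p q p' q' = S₀ p' q' p q)
    (r : ℝ) (hr : 0 < r) (n : ℕ)
    (hn4 : 4 ≤ n) (hn1 : (1 + 4 * Real.pi * C₁ * α * β ^ 2 * r) / Real.sqrt n ≤ 1)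
    (hn2 : 3 * (4 * Real.pi * C₁ * α * β ^ 2) * r * (1 + 4 * Real.pi * C₁ * α * β ^ 2 * r) / Real.sqrt n ≤ 1 / 2)
    (Rn : L1 → L1)
    (hRn : ∀ u : L1, memX r u → memX r (Rn u) ∧
      (fun p : E3 =>
          Real.sqrt n * (Rn u) p - (pZ α β p)⁻¹ * Qcoll α β S₀ (⇑(Rn u)) (⇑(Rn u)) p)
        =ᵐ[volume] ⇑u)
    (g₀ : L1) (hg₀ : memX r g₀) :
    ∃ f : ℝ → L1,
      (ContinuousOn f (Set.Icc (0:ℝ) (1 / (4 * (n:ℝ)))) ∧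
        (∀ t : ℝ, t ∈ Set.Icc (0:ℝ) (1 / (4 * (n:ℝ))) → memX r (f t)) ∧
        ∀ t : ℝ, t ∈ Set.Icc (0:ℝ) (1 / (4 * (n:ℝ))) → f t =
          Real.exp (-(n : ℝ) * t) • g₀ +
            ∫ s in (0:ℝ)..t,
              ((n : ℝ) * Real.sqrt n * Real.exp (-(n : ℝ) * (t - s))) • Rn (f s)) ∧
      f 0 = g₀ ∧
      (∀ t : ℝ, t ∈ Set.Icc (0:ℝ) (1 / (4 * (n:ℝ))) → ‖f t‖ ≤ ‖g₀‖) ∧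
      ∀ f' : ℝ → L1,
        (ContinuousOn f' (Set.Icc (0:ℝ) (1 / (4 * (n:ℝ)))) ∧
        (∀ t : ℝ, t ∈ Set.Icc (0:ℝ) (1 / (4 * (n:ℝ))) → memX r (f' t)) ∧
        ∀ t : ℝ, t ∈ Set.Icc (0:ℝ) (1 / (4 * (n:ℝ))) → f' t =
          Real.exp (-(n : ℝ) * t) • g₀ +
            ∫ s in (0:ℝ)..t,
              ((n : ℝ) * Real.sqrt n * Real.exp (-(n : ℝ) * (t - s))) • Rn (f' s)) →
        ∀ t : ℝ, t ∈ Set.Icc (0:ℝ) (1 / (4 * (n:ℝ))) → f' t = f t := by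
  have hα0 : 0 < α := hC₀.trans_le hα
  have hβ0 : 0 < β := hC₀.trans_le hβ
  have hn0 : (0 : ℝ) < n := by exact_mod_cast (by lia : 0 < n)
  have hs0 : 0 < Real.sqrt n := Real.sqrt_pos.mpr hn0
  have hδ : (0 : ℝ) ≤ 1 / (4 * (n : ℝ)) := by positivity
  -- the second smallness condition gives `C r ≤ √n / 6`, since `1 + C r ≥ 1`
  have hsmall : 4 * (4 * Real.pi * C₁ * α * β ^ 2) * r ≤ 2 / 3 * Real.sqrt n := by
    have hc : 0 ≤ 4 * Real.pi * C₁ * α * β ^ 2 * r := by positivity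
    rw [div_le_iff₀ hs0] at hn2
    nlinarith
  set A : L1 → L1 := fun u => Real.sqrt n • Rn u with hAdef
  have hA : ∀ u, memX r u → memX ‖u‖ (A u) := by
    intro u hu
    obtain ⟨h1, h2⟩ := hRn u hu
    refine memX_iff.mpr ⟨L1_smul_nonneg hs0.le (memX_iff.mp h1).1, ?_⟩
    rw [norm_smul, Real.norm_of_nonneg hs0.le]
    exact (resolvent_norm hα0 hβ0 hS₀meas hS₀nonneg hS₀bdd hS₀symm hu.1 h1.1 h2).le
  have hL : ∀ u v, memX r u → memX r v → ‖A u - A v‖ ≤ 3 * ‖u - v‖ := by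
    intro u v hu hv
    obtain ⟨h1, h2⟩ := hRn u hu
    obtain ⟨k1, k2⟩ := hRn v hv
    rw [hAdef, ← smul_sub, norm_smul, Real.norm_of_nonneg hs0.le]
    exact resolvent_lipschitz hα0 hβ0 hS₀meas hS₀nonneg hS₀bdd hS₀symm hs0.le hsmall
      h1.2 k1.2 h2 k2
  have hpic : ∀ (φ : ℝ → L1) (t : ℝ), Real.exp (-(n : ℝ) * t) • g₀ + ∫ s in (0:ℝ)..t,
      ((n : ℝ) * Real.sqrt n * Real.exp (-(n : ℝ) * (t - s))) • Rn (φ s) =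
      picard n A g₀ φ t := by
    intro φ t
    simp only [picard, hAdef, smul_smul, mul_right_comm]
  simp only [hpic]
  obtain ⟨f, hf, hfX, he⟩ := picard_fixedPoint hn0 hδ hg₀.2 hA hL
    (⟨hg₀.1, le_rfl⟩ : memX ‖g₀‖ g₀)
  refine ⟨f, ⟨hf.continuousOn, fun t _ => (hfX t).mono hg₀.2, he⟩, ?_, fun t _ => (hfX t).2, ?_⟩
  · rw [he 0 ⟨le_rfl, hδ⟩]
    simp [picard]
  · rintro f' ⟨hf', hfX', he'⟩
    exact picard_unique hn0 hδ hL hf.continuousOn hf' (fun t _ => (hfX t).mono hg₀.2) hfX' he he'
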